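/- Let A be a Hopf algebra over a field k with bijective antipode S, let P be a right group-like projection and Q a right shift of P (i.e. a nonzero idempotent with Δ(Q)(1 ⊗ Q) = P ⊗ Q = (1 ⊗ Q)Δ(Q)). Then P is a two-sided group-like projection if and only if S²(Q) = Q; and in that case there exists a two-sided group-like projection P̃ such that Q is a left shift of P̃, i.e. Δ(Q)(Q ⊗ 1) = Q ⊗ P̃ = (Q ⊗ 1)Δ(Q). -/

import Mathlib

open scoped TensorProduct

noncomputable section

variable (k : Type*) [Field k] {A : Type*} [Ring A] [HopfAlgebra k A]

/-- `P` is a right group-like projection: a nonzero idempotent with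
`Δ(P)(1 ⊗ P) = P ⊗ P = (1 ⊗ P)Δ(P)`. -/
def IsRightGroupLikeProjection (P : A) : Prop :=
  P ≠ 0 ∧ P * P = P ∧
    Coalgebra.comul (R := k) P * ((1 : A) ⊗ₜ[k] P) = P ⊗ₜ[k] P ∧
    ((1 : A) ⊗ₜ[k] P) * Coalgebra.comul (R := k) P = P ⊗ₜ[k] P

/-- `P` is a left group-like projection: a nonzero idempotent with
`Δ(P)(P ⊗ 1) = P ⊗ P = (P ⊗ 1)Δ(P)`. -/
def IsLeftGroupLikeProjection (P : A) : Prop :=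
  P ≠ 0 ∧ P * P = P ∧
    Coalgebra.comul (R := k) P * (P ⊗ₜ[k] (1 : A)) = P ⊗ₜ[k] P ∧
    (P ⊗ₜ[k] (1 : A)) * Coalgebra.comul (R := k) P = P ⊗ₜ[k] P

/-- A two-sided group-like projection. -/
def IsTwoSidedGroupLikeProjection (P : A) : Prop :=
  IsRightGroupLikeProjection k P ∧ IsLeftGroupLikeProjection k P

/-- `N_P^l = {x : (1 ⊗ P)Δ(x) = x ⊗ P}`. -/
def NPlSet (P : A) : Set A :=
  {x : A | ((1 : A) ⊗ₜ[k] P) * Coalgebra.comul (R := k) x = x ⊗ₜ[k] P}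

/-- `N_P^r = {x : Δ(x)(1 ⊗ P) = x ⊗ P}`. -/
def NPrSet (P : A) : Set A :=
  {x : A | Coalgebra.comul (R := k) x * ((1 : A) ⊗ₜ[k] P) = x ⊗ₜ[k] P}

/-- `N_P = N_P^l ∩ N_P^r`. -/
def NPSet (P : A) : Set A := NPlSet k P ∩ NPrSet k P

/-- `V_P = {(μ ⊗ id)(Δ(P)) : μ ∈ A*}`, the smallest left coideal containing `P`. -/
def VPSet (P : A) : Set A :=
  {x : A | ∃ μ : A →ₗ[k] k,
    x = TensorProduct.lid k A ((TensorProduct.map μ LinearMap.id) (Coalgebra.comul (R := k) P))}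

/-- A submodule `N ⊆ A` is a left coideal if `Δ(N) ⊆ A ⊗ N`. -/
def IsLeftCoideal (N : Submodule k A) : Prop :=
  ∀ x ∈ N, Coalgebra.comul (R := k) x ∈
    LinearMap.range (TensorProduct.map (LinearMap.id : A →ₗ[k] A) N.subtype)

/-- A subalgebra `N ⊆ A` is a left coideal subalgebra if `Δ(N) ⊆ A ⊗ N`. -/
def IsLeftCoidealSubalgebra (N : Subalgebra k A) : Prop :=
  IsLeftCoideal k (Subalgebra.toSubmodule N)

/-!
The map `x ⊗ y ↦ S y ⊗ S x` intertwines `Δ` with itself along `S`, so `S` exchanges right and left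
shifts. Since `Q` determines the element it is a shift of, `S²(Q) = Q` forces `S²(P) = P`. For a
right group-like projection `S(P)P = P`, and applying `S` to this gives `S(P)P = S(P)` as soon as
`S²(P) = P`; hence `S(P) = P`, and `P` is also left group-like. Conversely, a two-sided `P` is
fixed by `S`, and multiplying `Δ(P)` by `1 ⊗ S(Q)` from the two sides yields
`S²(Q) ⊗ S(Q) = Q ⊗ S(Q)`. Here `S(Q) ≠ 0` because `Q` is a right slice of
`Δ(P) = (S² ⊗ S²)(Δ(P))`, and `S²` maps the finite-dimensional space of right slices of this tensor
onto itself.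

Finally `Q = (id ⊗ φ)Δ(P)` for some functional `φ`, so with `L = (id ⊗ φ)Δ` coassociativity gives
`Δ(Q) = (id ⊗ L)Δ(P)`, and `Δ(P)(Q ⊗ 1) = Q ⊗ S(Q)` makes `Q` a left shift of `L(S(Q))`.
-/

open Coalgebra HopfAlgebra WithConv

section Slice

variable {R V V' W W' : Type*} [CommSemiring R] [AddCommMonoid V] [Module R V]
  [AddCommMonoid V'] [Module R V'] [AddCommMonoid W] [Module R W] [AddCommMonoid W'] [Module R W']

/-- The right slice `(id ⊗ φ)(u) ∈ V` of a tensor `u ∈ V ⊗ W` along a functional `φ` on `W`. -/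
def rightSlice (φ : W →ₗ[R] R) : V ⊗[R] W →ₗ[R] V :=
  (TensorProduct.rid R V).toLinearMap ∘ₗ φ.lTensor V

@[simp] lemma rightSlice_tmul (φ : W →ₗ[R] R) (v : V) (w : W) :
    rightSlice φ (v ⊗ₜ[R] w) = φ w • v := by
  simp [rightSlice]

lemma rightSlice_map (φ : W' →ₗ[R] R) (f : V →ₗ[R] V') (g : W →ₗ[R] W') (u : V ⊗[R] W) :
    rightSlice φ (TensorProduct.map f g u) = f (rightSlice (φ ∘ₗ g) u) := by
  induction u with
  | zero => simp
  | add u₁ u₂ h₁ h₂ => simp only [map_add, h₁, h₂]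
  | tmul v w => simp

variable {C : Type*} [AddCommMonoid C] [Module R C] [Coalgebra R C]

/-- The action `x ↦ x₍₁₎ φ(x₍₂₎)` of a functional `φ` on a coalgebra. -/
def comulSlice (φ : C →ₗ[R] R) : C →ₗ[R] C := rightSlice φ ∘ₗ comul

lemma comulSlice_apply (φ : C →ₗ[R] R) (x : C) : comulSlice φ x = rightSlice φ (comul x) := rfl

lemma comul_comulSlice (φ : C →ₗ[R] R) (x : C) :
    comul (comulSlice φ x) = (comulSlice φ).lTensor C (comul (R := R) x) := by
  have slice_assoc : (rightSlice φ).lTensor C ∘ₗ (TensorProduct.assoc R C C C).toLinearMap =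
      rightSlice φ := by
    ext; simp
  calc comul (comulSlice φ x)
      = rightSlice φ (comul.rTensor C (comul (R := R) x)) := by
        rw [LinearMap.rTensor, rightSlice_map, LinearMap.comp_id, comulSlice_apply]
    _ = (rightSlice φ).lTensor C (comul.lTensor C (comul (R := R) x)) := by
        rw [← slice_assoc, ← coassoc_apply]; rfl
    _ = (comulSlice φ).lTensor C (comul (R := R) x) := by
        rw [comulSlice, LinearMap.lTensor_comp_apply]

end Slice

section VectorSpace

variable {F V W : Type*} [Field F] [AddCommGroup V] [Module F V] [AddCommGroup W] [Module F W]

lemma tmul_right_cancel {w : W} (hw : w ≠ 0) {a b : V} (h : a ⊗ₜ[F] w = b ⊗ₜ[F] w) : a = b := by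
  obtain ⟨φ, hφ⟩ := Module.Projective.exists_dual_eq_one F hw
  simpa [hφ] using congrArg (rightSlice φ) h

lemma tmul_left_cancel {v : V} (hv : v ≠ 0) {a b : W} (h : v ⊗ₜ[F] a = v ⊗ₜ[F] b) : a = b :=
  tmul_right_cancel hv (by simpa using congrArg (TensorProduct.comm F V W) h)

lemma injOn_of_le_map {f : V →ₗ[F] V} {U : Submodule F V} [FiniteDimensional F U]
    (h : U ≤ U.map f) : Set.InjOn f U := by
  have finrank_eq : Module.finrank F U = Module.finrank F (U.map f) :=
    (Submodule.finrank_mono h).antisymm (Submodule.finrank_map_le f U)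
  have inj : Function.Injective (f.submoduleMap U) :=
    (LinearMap.injective_iff_surjective_of_finrank_eq_finrank finrank_eq).mpr
      (f.submoduleMap_surjective U)
  intro x hx y hy hxy
  exact congrArg Subtype.val (@inj ⟨x, hx⟩ ⟨y, hy⟩ (Subtype.ext hxy))

/-- The space of all right slices of a tensor. -/
def rightSlices (u : V ⊗[F] W) : Submodule F V :=
  Submodule.span F (Set.range fun φ : W →ₗ[F] F => rightSlice φ u)

lemma rightSlice_mem_rightSlices (φ : W →ₗ[F] F) (u : V ⊗[F] W) : rightSlice φ u ∈ rightSlices u :=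
  Submodule.subset_span ⟨φ, rfl⟩

instance finiteDimensional_rightSlices (u : V ⊗[F] W) : FiniteDimensional F (rightSlices u) := by
  obtain ⟨U, _, hU⟩ :=
    TensorProduct.exists_finite_submodule_left_of_setFinite {u} (Set.finite_singleton u)
  obtain ⟨v, rfl⟩ := hU rfl
  refine Submodule.finiteDimensional_of_le (S₂ := U) (Submodule.span_le.mpr ?_)
  rintro _ ⟨φ, rfl⟩
  simp [LinearMap.rTensor, rightSlice_map]

lemma injOn_rightSlices_of_map_eq {f : V →ₗ[F] V} {g : W →ₗ[F] W} {u : V ⊗[F] W}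
    (hu : TensorProduct.map f g u = u) : Set.InjOn f (rightSlices u) := by
  refine injOn_of_le_map (Submodule.span_le.mpr ?_)
  rintro _ ⟨φ, rfl⟩
  refine ⟨rightSlice (φ ∘ₗ g) u, rightSlice_mem_rightSlices _ u, ?_⟩
  rw [← rightSlice_map, hu]

end VectorSpace

section TensorAlgebra

variable {R H : Type*} [CommSemiring R] [Semiring H] [Algebra R H]

lemma rightSlice_mul_tmul (φ : H →ₗ[R] R) (u : H ⊗[R] H) (x y : H) :
    rightSlice φ (u * (x ⊗ₜ y)) = rightSlice (φ ∘ₗ LinearMap.mulRight R y) u * x := by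
  induction u with
  | zero => simp
  | add u₁ u₂ h₁ h₂ => simp only [add_mul, map_add, h₁, h₂]
  | tmul a b => simp

lemma rightSlice_tmul_mul (φ : H →ₗ[R] R) (u : H ⊗[R] H) (x y : H) :
    rightSlice φ ((x ⊗ₜ y) * u) = x * rightSlice (φ ∘ₗ LinearMap.mulLeft R y) u := by
  induction u with
  | zero => simp
  | add u₁ u₂ h₁ h₂ => simp only [mul_add, map_add, h₁, h₂]
  | tmul a b => simp

lemma lTensor_mul_tmul {g : H →ₗ[R] H} {y z : H} (hg : ∀ a, g (a * y) = g a * z) (w : H)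
    (u : H ⊗[R] H) : g.lTensor H (u * (w ⊗ₜ y)) = g.lTensor H u * (w ⊗ₜ z) := by
  induction u with
  | zero => simp
  | add u₁ u₂ h₁ h₂ => simp only [add_mul, map_add, h₁, h₂]
  | tmul a b => simp [hg]

lemma lTensor_tmul_mul {g : H →ₗ[R] H} {y z : H} (hg : ∀ a, g (y * a) = z * g a) (w : H)
    (u : H ⊗[R] H) : g.lTensor H ((w ⊗ₜ y) * u) = (w ⊗ₜ z) * g.lTensor H u := by
  induction u with
  | zero => simp
  | add u₁ u₂ h₁ h₂ => simp only [mul_add, map_add, h₁, h₂]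
  | tmul a b => simp [hg]

end TensorAlgebra

section Bialgebra

variable {R H : Type*} [CommSemiring R] [Semiring H] [Bialgebra R H]

lemma comulSlice_mulRight_eq {x y p z : H} (h : comul (R := R) x * (1 ⊗ₜ y) = p ⊗ₜ z)
    (φ : H →ₗ[R] R) : comulSlice (φ ∘ₗ LinearMap.mulRight R y) x = φ z • p := by
  simpa [comulSlice_apply, h] using (rightSlice_mul_tmul φ (comul x) 1 y).symm

lemma comulSlice_mulLeft_eq {x y p z : H} (h : (1 ⊗ₜ y) * comul (R := R) x = p ⊗ₜ z)
    (φ : H →ₗ[R] R) : comulSlice (φ ∘ₗ LinearMap.mulLeft R y) x = φ z • p := by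
  simpa [comulSlice_apply, h] using (rightSlice_tmul_mul φ (comul x) 1 y).symm

lemma comulSlice_mulRight_mul {x y p z : H} (h : comul (R := R) x * (1 ⊗ₜ y) = p ⊗ₜ z)
    (φ : H →ₗ[R] R) (a : H) : comulSlice (φ ∘ₗ LinearMap.mulRight R y) (a * x) =
      comulSlice (φ ∘ₗ LinearMap.mulRight R z) a * p := by
  have := rightSlice_mul_tmul φ (comul (a * x)) 1 y
  rw [Bialgebra.comul_mul, mul_assoc, h, rightSlice_mul_tmul, mul_one] at this
  simpa only [comulSlice_apply, Bialgebra.comul_mul] using this.symm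

lemma comulSlice_mulLeft_mul {x y p z : H} (h : (1 ⊗ₜ y) * comul (R := R) x = p ⊗ₜ z)
    (φ : H →ₗ[R] R) (a : H) : comulSlice (φ ∘ₗ LinearMap.mulLeft R y) (x * a) =
      p * comulSlice (φ ∘ₗ LinearMap.mulLeft R z) a := by
  have := rightSlice_tmul_mul φ (comul (x * a)) 1 y
  rw [Bialgebra.comul_mul, ← mul_assoc, h, rightSlice_tmul_mul, one_mul] at this
  simpa only [comulSlice_apply, Bialgebra.comul_mul] using this.symm

end Bialgebra

section Convolution

variable {R H B : Type*} [CommSemiring R] [Semiring H] [Semiring B] [Algebra R B]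

open Algebra.TensorProduct (includeLeft includeRight)

local notation "ι₁" => AlgHom.toLinearMap (includeLeft : H →ₐ[R] H ⊗[R] H)
local notation "ι₂" => AlgHom.toLinearMap (includeRight : H →ₐ[R] H ⊗[R] H)

section Bialgebra

variable [Bialgebra R H]

lemma convMul_apply_mul_of_comul_mul {x y p z : H} {w : B}
    (h : comul (R := R) x * (1 ⊗ₜ y) = p ⊗ₜ z) (f g : H →ₗ[R] B)
    (hg : ∀ a, g (a * y) = g a * w) :
    (toConv f * toConv g) x * w = f p * g z := by
  have := congrArg (LinearMap.mul' R B ∘ₗ TensorProduct.map f g) h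
  rw [← (ℛ R x).eq, Finset.sum_mul] at this
  rw [(ℛ R x).convMul_apply, Finset.sum_mul]
  simpa [hg, mul_assoc] using this

lemma convMul_apply_mul_of_mul_comul {x y p z : H} {w : B}
    (h : (1 ⊗ₜ y) * comul (R := R) x = p ⊗ₜ z) (f g : H →ₗ[R] B)
    (hg : ∀ a, g (y * a) = g a * w) :
    (toConv f * toConv g) x * w = f p * g z := by
  have := congrArg (LinearMap.mul' R B ∘ₗ TensorProduct.map f g) h
  rw [← (ℛ R x).eq, Finset.mul_sum] at this
  rw [(ℛ R x).convMul_apply, Finset.sum_mul]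
  simpa [hg, mul_assoc] using this

lemma mul_convMul_apply_of_comul_mul {x y p z : H} {w : B}
    (h : comul (R := R) x * (y ⊗ₜ 1) = z ⊗ₜ p) (f g : H →ₗ[R] B)
    (hf : ∀ a, f (a * y) = w * f a) :
    w * (toConv f * toConv g) x = f z * g p := by
  have := congrArg (LinearMap.mul' R B ∘ₗ TensorProduct.map f g) h
  rw [← (ℛ R x).eq, Finset.sum_mul] at this
  rw [(ℛ R x).convMul_apply, Finset.mul_sum]
  simpa [hf, mul_assoc] using this

lemma includeLeft_convMul_includeRight_comp (f : H →ₗ[R] H) :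
    toConv ι₁ * toConv (ι₂ ∘ₗ f) = toConv (f.lTensor H ∘ₗ comul) := by
  ext x
  rw [(ℛ R x).convMul_apply]
  simp [← (ℛ R x).eq]

lemma includeLeft_convMul_includeRight : toConv ι₁ * toConv ι₂ = toConv comul := by
  simpa using includeLeft_convMul_includeRight_comp (R := R) (H := H) LinearMap.id

end Bialgebra

variable [HopfAlgebra R H]

lemma algHom_comp_antipode_convMul (h : H →ₐ[R] B) :
    toConv (h.toLinearMap ∘ₗ antipode R) * toConv h.toLinearMap = 1 := by
  have := LinearMap.algHom_comp_convMul_distrib h (toConv (antipode R)) (toConv LinearMap.id)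
  rw [LinearMap.antipode_mul_id, LinearMap.convOne_def] at this
  exact (congrArg toConv this).symm.trans (by ext; simp [LinearMap.convOne_def])

lemma algHom_convMul_comp_antipode (h : H →ₐ[R] B) :
    toConv h.toLinearMap * toConv (h.toLinearMap ∘ₗ antipode R) = 1 := by
  have := LinearMap.algHom_comp_convMul_distrib h (toConv LinearMap.id) (toConv (antipode R))
  rw [LinearMap.id_mul_antipode, LinearMap.convOne_def] at this
  exact (congrArg toConv this).symm.trans (by ext; simp [LinearMap.convOne_def])

/-- The anti-multiplicative map `x ⊗ y ↦ S y ⊗ S x`, which intertwines `Δ` with itself along `S`. -/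
def antipodeSwap : H ⊗[R] H →ₗ[R] H ⊗[R] H :=
  TensorProduct.map (antipode R) (antipode R) ∘ₗ (TensorProduct.comm R H H).toLinearMap

@[simp] lemma antipodeSwap_tmul (x y : H) :
    antipodeSwap (x ⊗ₜ[R] y) = antipode R y ⊗ₜ antipode R x := rfl

lemma antipodeSwap_mul (u v : H ⊗[R] H) :
    antipodeSwap (u * v) = antipodeSwap v * antipodeSwap u := by
  induction u with
  | zero => simp
  | add u₁ u₂ h₁ h₂ => simp only [add_mul, mul_add, map_add, h₁, h₂]
  | tmul a b =>
    induction v with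
    | zero => simp
    | add v₁ v₂ h₁ h₂ => simp only [add_mul, mul_add, map_add, h₁, h₂]
    | tmul c d => simp [antipode_mul_antidistrib]

lemma antipodeSwap_antipodeSwap (u : H ⊗[R] H) :
    antipodeSwap (antipodeSwap u) =
      TensorProduct.map (antipode R ∘ₗ antipode R) (antipode R ∘ₗ antipode R) u := by
  induction u with
  | zero => simp
  | add u₁ u₂ h₁ h₂ => simp only [map_add, h₁, h₂]
  | tmul a b => simp

lemma includeRight_antipode_convMul_includeLeft_antipode :
    toConv (ι₂ ∘ₗ antipode R) * toConv (ι₁ ∘ₗ antipode R) = toConv (antipodeSwap ∘ₗ comul) := by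
  ext x
  rw [(ℛ R x).convMul_apply]
  simp [← (ℛ R x).eq]

lemma comul_antipode (x : H) : comul (R := R) (antipode R x) = antipodeSwap (comul x) := by
  have left_inv : toConv (antipodeSwap ∘ₗ comul) * toConv (comul (R := R) (A := H)) = 1 := by
    rw [← includeRight_antipode_convMul_includeLeft_antipode, ← includeLeft_convMul_includeRight,
      mul_assoc, ← mul_assoc (toConv (ι₁ ∘ₗ antipode R)), algHom_comp_antipode_convMul, one_mul,
      algHom_comp_antipode_convMul]
  have := left_inv_eq_right_inv left_inv (LinearMap.comul_right_inv (R := R) (C := H))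
  exact (LinearMap.congr_fun (congrArg WithConv.ofConv this) x).symm

lemma comul_convMul_includeRight_antipode :
    toConv comul * toConv (ι₂ ∘ₗ antipode R) = toConv ι₁ := by
  rw [← includeLeft_convMul_includeRight, mul_assoc, algHom_convMul_comp_antipode, mul_one]

lemma lTensor_antipode_comul_convMul_includeRight :
    toConv ((antipode R).lTensor H ∘ₗ comul) * toConv ι₂ = toConv ι₁ := by
  rw [← includeLeft_convMul_includeRight_comp, mul_assoc, algHom_comp_antipode_convMul, mul_one]

lemma antipodeSwap_comul_convMul_includeLeft :
    toConv (antipodeSwap ∘ₗ comul) * toConv ι₁ = toConv (ι₂ ∘ₗ antipode R) := by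
  rw [← includeRight_antipode_convMul_includeLeft_antipode, mul_assoc,
    algHom_comp_antipode_convMul, mul_one]

lemma comul_mul_one_tmul_antipode {x y p z : H} (h : (1 ⊗ₜ y) * comul (R := R) x = p ⊗ₜ z) :
    comul (R := R) p * (1 ⊗ₜ antipode R z) = x ⊗ₜ antipode R y := by
  have := convMul_apply_mul_of_mul_comul h comul (ι₂ ∘ₗ antipode R)
    (w := 1 ⊗ₜ antipode R y) (by simp [antipode_mul_antidistrib])
  rw [comul_convMul_includeRight_antipode] at this
  simpa using this.symm

lemma lTensor_antipode_comul_mul_one_tmul {x y p z : H}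
    (h : comul (R := R) x * (1 ⊗ₜ y) = p ⊗ₜ z) :
    (antipode R).lTensor H (comul (R := R) p) * (1 ⊗ₜ z) = x ⊗ₜ y := by
  have := convMul_apply_mul_of_comul_mul h ((antipode R).lTensor H ∘ₗ comul) ι₂
    (w := 1 ⊗ₜ y) (by simp)
  rw [lTensor_antipode_comul_convMul_includeRight] at this
  simpa using this.symm

lemma comul_antipode_mul_tmul_one {x y p z : H} (h : comul (R := R) x * (1 ⊗ₜ y) = p ⊗ₜ z) :
    comul (R := R) (antipode R p) * (z ⊗ₜ 1) = y ⊗ₜ antipode R x := by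
  have := convMul_apply_mul_of_comul_mul h (antipodeSwap ∘ₗ comul) ι₁
    (w := y ⊗ₜ 1) (by simp)
  rw [antipodeSwap_comul_convMul_includeLeft] at this
  simpa [comul_antipode] using this.symm

end Convolution

section Shift

variable {k}

variable {P P' Q : A}

variable (k) in
/-- `Q` is a right shift of `P`: a nonzero idempotent with `Δ(Q)(1 ⊗ Q) = P ⊗ Q = (1 ⊗ Q)Δ(Q)`.
Here `P` is arbitrary; it turns out to be a right group-like projection. -/
structure IsRightShift (P Q : A) : Prop where
  ne_zero : Q ≠ 0
  mul_self : Q * Q = Q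
  comul_mul : comul (R := k) Q * (1 ⊗ₜ Q) = P ⊗ₜ Q
  mul_comul : (1 ⊗ₜ Q) * comul (R := k) Q = P ⊗ₜ Q

variable (k) in
/-- `Q` is a left shift of `P`: a nonzero idempotent with `Δ(Q)(Q ⊗ 1) = Q ⊗ P = (Q ⊗ 1)Δ(Q)`.
Here too `P` is arbitrary. -/
structure IsLeftShift (P Q : A) : Prop where
  ne_zero : Q ≠ 0
  mul_self : Q * Q = Q
  comul_mul : comul (R := k) Q * (Q ⊗ₜ 1) = Q ⊗ₜ P
  mul_comul : (Q ⊗ₜ 1) * comul (R := k) Q = Q ⊗ₜ P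

lemma isRightShift_self_iff : IsRightShift k P P ↔ IsRightGroupLikeProjection k P :=
  ⟨fun h => ⟨h.1, h.2, h.3, h.4⟩, fun h => ⟨h.1, h.2.1, h.2.2.1, h.2.2.2⟩⟩

lemma isLeftShift_self_iff : IsLeftShift k P P ↔ IsLeftGroupLikeProjection k P :=
  ⟨fun h => ⟨h.1, h.2, h.3, h.4⟩, fun h => ⟨h.1, h.2.1, h.2.2.1, h.2.2.2⟩⟩

lemma IsRightShift.unique (h : IsRightShift k P Q) (h' : IsRightShift k P' Q) : P = P' :=
  tmul_right_cancel h.ne_zero (h.comul_mul.symm.trans h'.comul_mul)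

lemma IsLeftShift.unique (h : IsLeftShift k P Q) (h' : IsLeftShift k P' Q) : P = P' :=
  tmul_left_cancel h.ne_zero (h.comul_mul.symm.trans h'.comul_mul)

lemma IsRightShift.map_antipode (h : IsRightShift k P Q) (hQ : antipode k Q ≠ 0) :
    IsLeftShift k (antipode k P) (antipode k Q) where
  ne_zero := hQ
  mul_self := by rw [← antipode_mul_antidistrib, h.mul_self]
  comul_mul := by
    simpa [antipodeSwap_mul, comul_antipode] using congrArg antipodeSwap h.mul_comul
  mul_comul := by
    simpa [antipodeSwap_mul, comul_antipode] using congrArg antipodeSwap h.comul_mul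

lemma IsLeftShift.map_antipode (h : IsLeftShift k P Q) (hQ : antipode k Q ≠ 0) :
    IsRightShift k (antipode k P) (antipode k Q) where
  ne_zero := hQ
  mul_self := by rw [← antipode_mul_antidistrib, h.mul_self]
  comul_mul := by
    simpa [antipodeSwap_mul, comul_antipode] using congrArg antipodeSwap h.mul_comul
  mul_comul := by
    simpa [antipodeSwap_mul, comul_antipode] using congrArg antipodeSwap h.comul_mul

lemma antipode_ne_zero_of_antipode_antipode (hQ0 : Q ≠ 0)
    (hQ : antipode k (antipode k Q) = Q) : antipode k Q ≠ 0 :=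
  fun h => hQ0 (by rw [← hQ, h, map_zero])

lemma IsRightShift.antipode_antipode_left (h : IsRightShift k P Q)
    (hQ : antipode k (antipode k Q) = Q) : antipode k (antipode k P) = P := by
  have hSQ := antipode_ne_zero_of_antipode_antipode h.ne_zero hQ
  have := (h.map_antipode hSQ).map_antipode (hQ.symm ▸ h.ne_zero)
  exact IsRightShift.unique (hQ ▸ this) h

lemma IsLeftShift.antipode_antipode_left (h : IsLeftShift k P Q)
    (hQ : antipode k (antipode k Q) = Q) : antipode k (antipode k P) = P := by
  have hSQ := antipode_ne_zero_of_antipode_antipode h.ne_zero hQ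
  have := (h.map_antipode hSQ).map_antipode (hQ.symm ▸ h.ne_zero)
  exact IsLeftShift.unique (hQ ▸ this) h

lemma IsRightShift.counit_eq_one (h : IsRightShift k P Q) : counit (R := k) P = 1 := by
  have := convMul_apply_mul_of_comul_mul h.comul_mul (1 : WithConv (A →ₗ[k] A)).ofConv
    LinearMap.id (fun _ => rfl)
  have smul_eq : counit (R := k) P • Q = (1 : k) • Q := by
    simpa [h.mul_self, ← Algebra.smul_def] using this.symm
  exact smul_left_injective k h.ne_zero smul_eq

theorem IsRightShift.isRightGroupLikeProjection (h : IsRightShift k P Q) :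
    IsRightGroupLikeProjection k P := by
  obtain ⟨φ, hφ⟩ := Module.Projective.exists_dual_eq_one k h.ne_zero
  set L := comulSlice (φ ∘ₗ LinearMap.mulRight k Q) with hL
  set M := comulSlice (φ ∘ₗ LinearMap.mulLeft k Q) with hM
  have L_self : L Q = P := by simp [hL, comulSlice_mulRight_eq h.comul_mul, hφ]
  have M_self : M Q = P := by simp [hM, comulSlice_mulLeft_eq h.mul_comul, hφ]
  have L_mul (x : A) : L (x * Q) = L x * P := comulSlice_mulRight_mul h.comul_mul φ x
  have M_mul (x : A) : M (Q * x) = P * M x := comulSlice_mulLeft_mul h.mul_comul φ x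
  refine ⟨?_, ?_, ?_, ?_⟩
  · rintro rfl
    simpa using h.counit_eq_one
  · calc P * P = L Q * P := by rw [L_self]
      _ = P := by rw [← L_mul, h.mul_self, L_self]
  · calc comul P * (1 ⊗ₜ P) = L.lTensor A (comul Q) * (1 ⊗ₜ P) := by
          rw [← comul_comulSlice, ← hL, L_self]
      _ = P ⊗ₜ P := by rw [← lTensor_mul_tmul L_mul, h.comul_mul, LinearMap.lTensor_tmul, L_self]
  · calc (1 ⊗ₜ P) * comul P = (1 ⊗ₜ P) * M.lTensor A (comul Q) := by
          rw [← comul_comulSlice, ← hM, M_self]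
      _ = P ⊗ₜ P := by rw [← lTensor_tmul_mul M_mul, h.mul_comul, LinearMap.lTensor_tmul, M_self]

lemma IsRightGroupLikeProjection.antipode_mul_self (hP : IsRightGroupLikeProjection k P) :
    antipode k P * P = P := by
  have h := isRightShift_self_iff.mpr hP
  have := convMul_apply_mul_of_comul_mul h.comul_mul (antipode k) LinearMap.id (fun _ => rfl)
  simpa [LinearMap.antipode_mul_id, h.counit_eq_one] using this.symm

lemma IsTwoSidedGroupLikeProjection.antipode_eq (hP : IsTwoSidedGroupLikeProjection k P) :
    antipode k P = P := by
  have hR := isRightShift_self_iff.mpr hP.1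
  have hL := isLeftShift_self_iff.mpr hP.2
  have := mul_convMul_apply_of_comul_mul hL.comul_mul (antipode k) LinearMap.id
    (antipode_mul_antidistrib · P)
  calc antipode k P = antipode k P * P := by
        simpa [LinearMap.antipode_mul_id, hR.counit_eq_one] using this
    _ = P := hP.1.antipode_mul_self

lemma IsRightGroupLikeProjection.antipode_eq (hP : IsRightGroupLikeProjection k P)
    (hS : antipode k (antipode k P) = P) : antipode k P = P := by
  have h := congrArg (antipode k) hP.antipode_mul_self
  rw [antipode_mul_antidistrib, hS, hP.antipode_mul_self] at h
  exact h.symm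

lemma IsRightGroupLikeProjection.isTwoSided (hP : IsRightGroupLikeProjection k P)
    (hS : antipode k P = P) : IsTwoSidedGroupLikeProjection k P := by
  have := (isRightShift_self_iff.mpr hP).map_antipode (by rw [hS]; exact hP.1)
  rw [hS] at this
  exact ⟨hP, isLeftShift_self_iff.mp this⟩

lemma IsRightShift.antipode_eq (h : IsRightShift k P Q) (hQ : antipode k (antipode k Q) = Q) :
    antipode k P = P :=
  h.isRightGroupLikeProjection.antipode_eq (h.antipode_antipode_left hQ)

lemma IsRightShift.isTwoSided (h : IsRightShift k P Q) (hQ : antipode k (antipode k Q) = Q) :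
    IsTwoSidedGroupLikeProjection k P :=
  h.isRightGroupLikeProjection.isTwoSided (h.antipode_eq hQ)

lemma IsLeftShift.isTwoSided (h : IsLeftShift k P Q) (hQ : antipode k (antipode k Q) = Q) :
    IsTwoSidedGroupLikeProjection k P := by
  have hSQ := antipode_ne_zero_of_antipode_antipode h.ne_zero hQ
  have shift := h.map_antipode hSQ
  have hP : antipode k P = P := by
    rw [← shift.antipode_eq (congrArg (antipode k) hQ), h.antipode_antipode_left hQ]
  exact hP ▸ shift.isTwoSided (congrArg (antipode k) hQ)

lemma IsRightShift.exists_comulSlice_eq (h : IsRightShift k P Q) :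
    ∃ φ : A →ₗ[k] k, comulSlice φ P = Q := by
  obtain ⟨φ, hφ⟩ := Module.Projective.exists_dual_eq_one k h.ne_zero
  refine ⟨φ ∘ₗ LinearMap.mulRight k Q ∘ₗ antipode k, ?_⟩
  have := congrArg (rightSlice φ) (lTensor_antipode_comul_mul_one_tmul h.comul_mul)
  rw [rightSlice_mul_tmul, mul_one, LinearMap.lTensor, rightSlice_map] at this
  simpa [comulSlice_apply, LinearMap.comp_assoc, hφ] using this

lemma IsRightShift.antipode_ne_zero (h : IsRightShift k P Q) (hP : antipode k P = P) :
    antipode k Q ≠ 0 := by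
  obtain ⟨φ, rfl⟩ := h.exists_comulSlice_eq
  have map_comul : TensorProduct.map (antipode k ∘ₗ antipode k) (antipode k ∘ₗ antipode k)
      (comul (R := k) P) = comul P := by
    rw [← antipodeSwap_antipodeSwap, ← comul_antipode, ← comul_antipode, hP, hP]
  intro hSQ
  apply h.ne_zero
  exact injOn_rightSlices_of_map_eq map_comul (rightSlice_mem_rightSlices φ _) (zero_mem _)
    (by simp [← comulSlice_apply, hSQ])

lemma IsRightShift.comul_left_mul (h : IsRightShift k P Q) (hP : antipode k P = P) :
    comul (R := k) P * (Q ⊗ₜ 1) = Q ⊗ₜ antipode k Q := by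
  simpa [hP] using comul_antipode_mul_tmul_one h.comul_mul

theorem IsRightShift.antipode_antipode_eq (h : IsRightShift k P Q) (hP : antipode k P = P) :
    antipode k (antipode k Q) = Q := by
  have hSQ := h.antipode_ne_zero hP
  have mul_comul : (1 ⊗ₜ antipode k Q) * comul (R := k) P =
      antipode k (antipode k Q) ⊗ₜ antipode k Q := by
    simpa [antipodeSwap_mul, ← comul_antipode, hP] using
      congrArg antipodeSwap (h.comul_left_mul hP)
  have comul_mul := comul_mul_one_tmul_antipode h.mul_comul
  have hSQ2 := (h.map_antipode hSQ).mul_self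
  apply tmul_right_cancel (F := k) hSQ
  calc antipode k (antipode k Q) ⊗ₜ[k] antipode k Q
      = (1 ⊗ₜ antipode k Q) * comul P * (1 ⊗ₜ antipode k Q) := by simp [mul_comul, hSQ2]
    _ = Q ⊗ₜ[k] antipode k Q := by simp [mul_assoc, comul_mul, hSQ2]

theorem IsRightShift.exists_isLeftShift (h : IsRightShift k P Q)
    (hQ : antipode k (antipode k Q) = Q) : ∃ P' : A, IsLeftShift k P' Q := by
  have hP := h.antipode_eq hQ
  have mul_comul : (Q ⊗ₜ 1) * comul (R := k) P = Q ⊗ₜ antipode k Q := by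
    simpa [antipodeSwap_mul, ← comul_antipode, hP, hQ] using
      congrArg antipodeSwap (comul_mul_one_tmul_antipode h.mul_comul)
  obtain ⟨φ, hφ⟩ := h.exists_comulSlice_eq
  have comul_Q : comul Q = (comulSlice φ).lTensor A (comul P) := by rw [← comul_comulSlice, hφ]
  refine ⟨comulSlice φ (antipode k Q), h.ne_zero, h.mul_self, ?_, ?_⟩
  · rw [comul_Q, ← lTensor_mul_tmul (y := 1) (by simp), h.comul_left_mul hP,
      LinearMap.lTensor_tmul]
  · rw [comul_Q, ← lTensor_tmul_mul (y := 1) (by simp), mul_comul, LinearMap.lTensor_tmul]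

theorem statement13_general {P Q : A} (h : IsRightShift k P Q) :
    (IsTwoSidedGroupLikeProjection k P ↔ antipode k (antipode k Q) = Q) ∧
      (antipode k (antipode k Q) = Q →
        ∃ P' : A, IsTwoSidedGroupLikeProjection k P' ∧ IsLeftShift k P' Q) := by
  refine ⟨⟨fun hP => h.antipode_antipode_eq hP.antipode_eq, h.isTwoSided⟩, fun hQ => ?_⟩
  obtain ⟨P', hP'⟩ := h.exists_isLeftShift hQ
  exact ⟨P', hP'.isTwoSided hQ, hP'⟩

end Shift

/-- Theorem: if `Q` is a right shift of the right group-like projection `P`, then `P` is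
two-sided iff `S²(Q) = Q`, and in that case `Q` is a left shift of some two-sided
group-like projection `P̃`. -/
theorem statement13
    (hS : Function.Bijective (HopfAlgebra.antipode (R := k) : A →ₗ[k] A))
    (P Q : A) (hP : IsRightGroupLikeProjection k P)
    (hQ0 : Q ≠ 0) (hQ2 : Q * Q = Q)
    (hshift1 : Coalgebra.comul (R := k) Q * ((1 : A) ⊗ₜ[k] Q) = P ⊗ₜ[k] Q)
    (hshift2 : ((1 : A) ⊗ₜ[k] Q) * Coalgebra.comul (R := k) Q = P ⊗ₜ[k] Q) :
    (IsTwoSidedGroupLikeProjection k P ↔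
      HopfAlgebra.antipode (R := k) (HopfAlgebra.antipode (R := k) Q) = Q) ∧
    (HopfAlgebra.antipode (R := k) (HopfAlgebra.antipode (R := k) Q) = Q →
      ∃ P' : A, IsTwoSidedGroupLikeProjection k P' ∧
        Coalgebra.comul (R := k) Q * (Q ⊗ₜ[k] (1 : A)) = Q ⊗ₜ[k] P' ∧
        (Q ⊗ₜ[k] (1 : A)) * Coalgebra.comul (R := k) Q = Q ⊗ₜ[k] P') := by
  obtain ⟨two_sided_iff, exists_shift⟩ := statement13_general (k := k) ⟨hQ0, hQ2, hshift1, hshift2⟩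
  exact ⟨two_sided_iff, fun hQ =>
    (exists_shift hQ).imp fun _ h => ⟨h.1, h.2.comul_mul, h.2.mul_comul⟩⟩
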